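/- Let V : ℝ² → ℝ be a continuous, doubly 2π-periodic, symmetric function, let d, c ∈ ℝ, and let v, w : ℝ² → ℝ be smooth, doubly 2π-periodic, symmetric functions with v(x,y) > 0 and w(x,y) > 0 for all (x,y), satisfying −Δv + dv = Vv and −Δw + cw = Vw on ℝ². Then d = c, and there exists α > 0 such that v = αw; that is, positive periodic eigenfunctions of the Schrödinger operator −Δ − V correspond to the same eigenvalue and are proportional. -/

import Mathlib

/-!
The integral of `∂ₑF` over a period cell vanishes for every periodic `F`, so a periodic field whose
divergence is nonnegative is divergence-free. Writing `h = v / w`, the two equations combine to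
`div (w² ∇h) = w Δv - v Δw = (d - c) v w`. The right-hand side has constant sign, hence vanishes,
and `d = c`. Now `w² ∇h` is divergence-free, so `div (h w² ∇h) = w² |∇h|² ≥ 0`; this vanishes as
well, and `h` is constant.
-/

noncomputable section
open Real

/-- doubly 2π-periodic -/
def DblPeriodic (u : ℝ → ℝ → ℝ) : Prop :=
  ∀ x y : ℝ, u (x + 2*π) y = u x y ∧ u x (y + 2*π) = u x y

/-- symmetric: even in each variable separately -/
def SymFun (u : ℝ → ℝ → ℝ) : Prop :=
  ∀ x y : ℝ, u (-x) y = u x y ∧ u x (-y) = u x y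

/-- smooth as a function on ℝ² -/
def Smooth2 (u : ℝ → ℝ → ℝ) : Prop :=
  ContDiff ℝ (⊤ : ℕ∞) fun p : ℝ × ℝ => u p.1 p.2

/-- the Laplacian Δu = u_xx + u_yy -/
def lap (u : ℝ → ℝ → ℝ) (x y : ℝ) : ℝ :=
  deriv (fun t => deriv (fun s => u s y) t) x + deriv (fun t => deriv (fun s => u x s) t) y

open Function MeasureTheory Set Submodule ZSpan
open scoped Pointwise

section LineDeriv

variable {𝕜 E : Type*} [NontriviallyNormedField 𝕜] [NormedAddCommGroup E] [NormedSpace 𝕜 E]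

section VectorValued

variable {F : Type*} [NormedAddCommGroup F] [NormedSpace 𝕜 F] {f g : E → F}

lemma lineDeriv_sub {x e : E} (hf : LineDifferentiableAt 𝕜 f x e)
    (hg : LineDifferentiableAt 𝕜 g x e) :
    lineDeriv 𝕜 (f - g) x e = lineDeriv 𝕜 f x e - lineDeriv 𝕜 g x e :=
  deriv_fun_sub hf hg

lemma periodic_lineDeriv {c : E} (hf : Periodic f c) (e : E) :
    Periodic (lineDeriv 𝕜 f · e) c := fun x ↦ by
  simp only [lineDeriv, add_right_comm x c, hf _]

lemma contDiff_lineDeriv {m n : WithTop ℕ∞} (hf : ContDiff 𝕜 n f) (hmn : m + 1 ≤ n) (e : E) :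
    ContDiff 𝕜 m (lineDeriv 𝕜 f · e) := by
  have hdiff : Differentiable 𝕜 f := (hf.of_le (le_add_self.trans hmn)).differentiable_one
  simp only [fun x ↦ (hdiff x).lineDeriv_eq_fderiv (v := e)]
  exact (hf.fderiv_right hmn).clm_apply contDiff_const

lemma hasDerivAt_lineDeriv (hf : Differentiable 𝕜 f) (x e : E) (t : 𝕜) :
    HasDerivAt (fun s ↦ f (x + s • e)) (lineDeriv 𝕜 f (x + t • e) e) t := by
  have hline : HasDerivAt (fun s : 𝕜 ↦ x + s • e) e t := by
    simpa using ((hasDerivAt_id t).smul_const e).const_add x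
  rw [(hf _).lineDeriv_eq_fderiv]
  exact (hf _).hasFDerivAt.comp_hasDerivAt t hline

end VectorValued

variable {f g : E → 𝕜} {x e : E}

lemma lineDeriv_mul (hf : LineDifferentiableAt 𝕜 f x e) (hg : LineDifferentiableAt 𝕜 g x e) :
    lineDeriv 𝕜 (f * g) x e = lineDeriv 𝕜 f x e * g x + f x * lineDeriv 𝕜 g x e := by
  simpa [lineDeriv] using deriv_fun_mul hf hg

lemma sum_lineDeriv_mul {κ : Type*} [Fintype κ] {e : κ → E} {F : κ → E → 𝕜}
    (hf : DifferentiableAt 𝕜 f x) (hF : ∀ k, DifferentiableAt 𝕜 (F k) x) :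
    ∑ k, lineDeriv 𝕜 (f * F k) x (e k) =
      ∑ k, lineDeriv 𝕜 f x (e k) * F k x + f x * ∑ k, lineDeriv 𝕜 (F k) x (e k) := by
  simp only [fun k ↦ lineDeriv_mul (e := e k) hf.lineDifferentiableAt (hF k).lineDifferentiableAt,
    Finset.sum_add_distrib, Finset.mul_sum]

lemma lineDeriv_div (hf : LineDifferentiableAt 𝕜 f x e) (hg : LineDifferentiableAt 𝕜 g x e)
    (hx : g x ≠ 0) :
    lineDeriv 𝕜 (f / g) x e = (lineDeriv 𝕜 f x e * g x - f x * lineDeriv 𝕜 g x e) / g x ^ 2 := by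
  simpa [lineDeriv] using deriv_fun_div hf hg (by simpa using hx)

lemma lineDeriv_sq_mul_lineDeriv_div {v w : E → 𝕜} (hv : ContDiff 𝕜 2 v) (hw : ContDiff 𝕜 2 w)
    (hw0 : ∀ x, w x ≠ 0) (x e : E) :
    lineDeriv 𝕜 (fun y ↦ w y ^ 2 * lineDeriv 𝕜 (v / w) y e) x e =
      w x * lineDeriv 𝕜 (lineDeriv 𝕜 v · e) x e - v x * lineDeriv 𝕜 (lineDeriv 𝕜 w · e) x e := by
  have hline {f : E → 𝕜} (hf : ContDiff 𝕜 1 f) (y : E) : LineDifferentiableAt 𝕜 f y e :=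
    (hf.differentiable_one y).lineDifferentiableAt
  have hv1 : ContDiff 𝕜 1 v := hv.of_le one_le_two
  have hw1 : ContDiff 𝕜 1 w := hw.of_le one_le_two
  have hdv : ContDiff 𝕜 1 (lineDeriv 𝕜 v · e) := contDiff_lineDeriv hv one_add_one_eq_two.le e
  have hdw : ContDiff 𝕜 1 (lineDeriv 𝕜 w · e) := contDiff_lineDeriv hw one_add_one_eq_two.le e
  have hwronskian : (fun y ↦ w y ^ 2 * lineDeriv 𝕜 (v / w) y e) =
      (lineDeriv 𝕜 v · e) * w - v * (lineDeriv 𝕜 w · e) := funext fun y ↦ by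
    rw [lineDeriv_div (hline hv1 y) (hline hw1 y) (hw0 y),
      mul_div_cancel₀ _ (pow_ne_zero 2 (hw0 y))]
    rfl
  rw [hwronskian, lineDeriv_sub (hline (f := _ * _) (hdv.mul hw1) x)
      (hline (f := _ * _) (hv1.mul hdw) x),
    lineDeriv_mul (hline hdv x) (hline hw1 x), lineDeriv_mul (hline hv1 x) (hline hdw x)]
  ring

end LineDeriv

section Periodic

lemma periodic_of_mem_span_int {E ι α : Type*} [AddCommGroup E] {b : ι → E} {f : E → α}
    (hf : ∀ i, Periodic f (b i)) {l : E} (hl : l ∈ span ℤ (range b)) : Periodic f l := by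
  induction hl using Submodule.span_induction with
  | mem l hl => obtain ⟨i, rfl⟩ := hl; exact hf i
  | zero => exact fun x ↦ by rw [add_zero]
  | add l m _ _ hl hm => exact hl.add_period hm
  | smul n l _ hl => exact hl.zsmul n

variable {E ι F : Type*} [NormedAddCommGroup E] [NormedSpace ℝ E] (b : Module.Basis ι ℝ E)
  [NormedAddCommGroup F]

lemma vadd_eq_of_periodic {α : Type*} {f : E → α} (hf : ∀ i, Periodic f (b i))
    (l : (span ℤ (range b)).toAddSubgroup) (x : E) : f (l +ᵥ x) = f x :=
  (congrArg f (add_comm (l : E) x)).trans (periodic_of_mem_span_int hf l.2 x)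

instance countable_span_int_range_basis [Finite ι] : Countable (span ℤ (range b)).toAddSubgroup :=
  inferInstanceAs (Countable (span ℤ (range b)))

variable [FiniteDimensional ℝ E] [MeasurableSpace E] [BorelSpace E] (μ : Measure E)

lemma integrableOn_fundamentalDomain [IsFiniteMeasureOnCompacts μ] {f : E → F}
    (hf : Continuous f) : IntegrableOn f (fundamentalDomain b) μ :=
  have := Module.Finite.finite_basis b
  (hf.continuousOn.integrableOn_compact
    (fundamentalDomain_isBounded b).isCompact_closure).mono_set subset_closure

lemma setIntegral_fundamentalDomain_add [NormedSpace ℝ F] [μ.IsAddLeftInvariant]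
    {f : E → F} (hf : ∀ i, Periodic f (b i)) (a : E) :
    ∫ x in fundamentalDomain b, f (x + a) ∂μ = ∫ x in fundamentalDomain b, f x ∂μ := by
  have := Module.Finite.finite_basis b
  have hD := ZSpan.isAddFundamentalDomain' b μ
  calc ∫ x in fundamentalDomain b, f (x + a) ∂μ
      = ∫ x in (a +ᵥ ·) '' fundamentalDomain b, f x ∂μ := by
        rw [(measurePreserving_vadd a μ).setIntegral_image_emb (measurableEmbedding_const_vadd a)]
        simp only [vadd_eq_add, add_comm]
    _ = ∫ x in fundamentalDomain b, f x ∂μ :=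
        (hD.vadd_of_comm a).setIntegral_eq hD (vadd_eq_of_periodic b hf)

lemma intervalIntegral_setIntegral_fundamentalDomain_swap [NormedSpace ℝ F]
    [IsFiniteMeasureOnCompacts μ] {f : ℝ → E → F} (hf : Continuous (uncurry f)) (s t : ℝ) :
    ∫ r in s..t, ∫ x in fundamentalDomain b, f r x ∂μ =
      ∫ x in fundamentalDomain b, (∫ r in s..t, f r x) ∂μ := by
  have := Module.Finite.finite_basis b
  apply intervalIntegral_integral_swap
  rw [Measure.prod_restrict]
  exact (hf.continuousOn.integrableOn_compact (isCompact_uIcc.prod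
    (fundamentalDomain_isBounded b).isCompact_closure)).mono_set
    (prod_mono uIoc_subset_uIcc subset_closure)

variable [μ.IsAddHaarMeasure]

-- Averaging `f (x + e) - f x = ∫₀¹ ∂ₑf (x + t e) dt` over a cell removes both translations.
lemma setIntegral_lineDeriv_eq_zero [NormedSpace ℝ F] [CompleteSpace F] {f : E → F}
    (hf : ContDiff ℝ 1 f) (hper : ∀ i, Periodic f (b i)) (e : E) :
    ∫ x in fundamentalDomain b, lineDeriv ℝ f x e ∂μ = 0 := by
  have hcont : Continuous (lineDeriv ℝ f · e) :=
    (contDiff_lineDeriv hf (zero_add 1).le e).continuous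
  have hftc (x : E) : ∫ t in (0 : ℝ)..1, lineDeriv ℝ f (x + t • e) e = f (x + e) - f x := by
    rw [intervalIntegral.integral_eq_sub_of_hasDerivAt
      (fun t _ ↦ hasDerivAt_lineDeriv hf.differentiable_one x e t)
      (Continuous.intervalIntegrable (by fun_prop) _ _)]
    simp
  have htranslate (t : ℝ) : ∫ x in fundamentalDomain b, lineDeriv ℝ f (x + t • e) e ∂μ =
      ∫ x in fundamentalDomain b, lineDeriv ℝ f x e ∂μ :=
    setIntegral_fundamentalDomain_add b μ (fun i ↦ periodic_lineDeriv (hper i) e) (t • e)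
  calc ∫ x in fundamentalDomain b, lineDeriv ℝ f x e ∂μ
      = ∫ t in (0 : ℝ)..1, ∫ x in fundamentalDomain b, lineDeriv ℝ f (x + t • e) e ∂μ := by
        simp [htranslate]
    _ = ∫ x in fundamentalDomain b, (∫ t in (0 : ℝ)..1, lineDeriv ℝ f (x + t • e) e) ∂μ :=
        intervalIntegral_setIntegral_fundamentalDomain_swap b μ (by fun_prop) 0 1
    _ = ∫ x in fundamentalDomain b, (f (x + e) - f x) ∂μ := by simp only [hftc]
    _ = 0 := by
        have hfcont := hf.continuous
        rw [integral_sub (integrableOn_fundamentalDomain b μ (by fun_prop))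
          (integrableOn_fundamentalDomain b μ hfcont),
          setIntegral_fundamentalDomain_add b μ hper, sub_self]

lemma eq_zero_of_setIntegral_fundamentalDomain_eq_zero {f : E → ℝ} (hf : Continuous f)
    (hper : ∀ i, Periodic f (b i)) (hnonneg : 0 ≤ f)
    (hint : ∫ x in fundamentalDomain b, f x ∂μ = 0) : f = 0 := by
  have := Module.Finite.finite_basis b
  rw [setIntegral_eq_zero_iff_of_nonneg_ae (.of_forall hnonneg)
    (integrableOn_fundamentalDomain b μ hf)] at hint
  have hnull : μ (support f ∩ fundamentalDomain b) = 0 := by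
    rwa [← Measure.restrict_apply' (fundamentalDomain_measurableSet b)]
  have hsupport : μ (support f) = 0 :=
    (ZSpan.isAddFundamentalDomain' b μ).measure_zero_of_invariant _ (fun l ↦ by
      ext x
      simp only [mem_vadd_set_iff_neg_vadd_mem, mem_support, vadd_eq_of_periodic b hper]) hnull
  exact (hf.ae_eq_iff_eq μ continuous_zero).mp hsupport

end Periodic

section DivergenceForm

variable {E ι κ : Type*} [NormedAddCommGroup E] [NormedSpace ℝ E] [FiniteDimensional ℝ E]
  {b : Module.Basis ι ℝ E} [Fintype κ] {e : κ → E}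

lemma sum_lineDeriv_eq_zero_of_nonneg {F : κ → E → ℝ} (hF : ∀ k, ContDiff ℝ 1 (F k))
    (hper : ∀ k i, Periodic (F k) (b i)) (hnonneg : ∀ x, 0 ≤ ∑ k, lineDeriv ℝ (F k) x (e k))
    (x : E) : ∑ k, lineDeriv ℝ (F k) x (e k) = 0 := by
  borelize E
  have hcont (k : κ) : Continuous (lineDeriv ℝ (F k) · (e k)) :=
    (contDiff_lineDeriv (hF k) (zero_add 1).le (e k)).continuous
  refine congrFun (eq_zero_of_setIntegral_fundamentalDomain_eq_zero b Measure.addHaar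
    (f := fun x ↦ ∑ k, lineDeriv ℝ (F k) x (e k)) (by fun_prop) (fun i x ↦ ?_) hnonneg ?_) x
  · exact Finset.sum_congr rfl fun k _ ↦ periodic_lineDeriv (hper k i) (e k) x
  · rw [integral_finsetSum _ fun k _ ↦ integrableOn_fundamentalDomain b _ (hcont k)]
    exact Finset.sum_eq_zero fun k _ ↦ setIntegral_lineDeriv_eq_zero b _ (hF k) (hper k) (e k)

lemma lineDeriv_eq_zero_of_sum_lineDeriv_mul_lineDeriv_eq_zero {ρ h : E → ℝ}
    (hρ : ContDiff ℝ 1 ρ) (hρper : ∀ i, Periodic ρ (b i)) (hρpos : ∀ x, 0 < ρ x)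
    (hh : ContDiff ℝ 2 h) (hhper : ∀ i, Periodic h (b i))
    (hdiv : ∀ x, ∑ k, lineDeriv ℝ (fun y ↦ ρ y * lineDeriv ℝ h y (e k)) x (e k) = 0)
    (k : κ) (x : E) : lineDeriv ℝ h x (e k) = 0 := by
  have hh1 : ContDiff ℝ 1 h := hh.of_le one_le_two
  have hflux (k : κ) : ContDiff ℝ 1 (fun y ↦ ρ y * lineDeriv ℝ h y (e k)) :=
    hρ.mul (contDiff_lineDeriv hh one_add_one_eq_two.le (e k))
  have henergy (x : E) :
      ∑ k, lineDeriv ℝ (h * fun y ↦ ρ y * lineDeriv ℝ h y (e k)) x (e k) =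
        ρ x * ∑ k, lineDeriv ℝ h x (e k) ^ 2 := by
    rw [sum_lineDeriv_mul (hh1.differentiable_one x) fun k ↦ (hflux k).differentiable_one x,
      hdiv, mul_zero, add_zero, Finset.mul_sum]
    exact Finset.sum_congr rfl fun k _ ↦ by ring
  have hsum_sq : ρ x * ∑ k, lineDeriv ℝ h x (e k) ^ 2 = 0 := by
    rw [← henergy]
    exact sum_lineDeriv_eq_zero_of_nonneg (b := b) (fun k ↦ hh1.mul (hflux k))
      (fun k i ↦ (hhper i).mul ((hρper i).mul (periodic_lineDeriv (hhper i) (e k))))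
      (fun y ↦ (henergy y).symm ▸ mul_nonneg (hρpos y).le (Finset.sum_nonneg fun k _ ↦ sq_nonneg _))
      x
  have hsq : ∀ k ∈ Finset.univ, lineDeriv ℝ h x (e k) ^ 2 = 0 :=
    (Finset.sum_eq_zero_iff_of_nonneg fun k _ ↦ sq_nonneg _).mp
      ((mul_eq_zero_iff_left (hρpos x).ne').mp hsum_sq)
  exact pow_eq_zero_iff two_ne_zero |>.mp (hsq k (Finset.mem_univ k))

end DivergenceForm

section Eigenfunctions

lemma eq_of_lineDeriv_eq_zero {E F κ : Type*} [NormedAddCommGroup E] [NormedSpace ℝ E]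
    [NormedAddCommGroup F] [NormedSpace ℝ F] {e : κ → E} (he : span ℝ (range e) = ⊤)
    {f : E → F} (hf : Differentiable ℝ f)
    (hzero : ∀ k x, lineDeriv ℝ f x (e k) = 0) (x y : E) : f x = f y := by
  refine is_const_of_fderiv_eq_zero (𝕜 := ℝ) hf (fun z ↦ ?_) x y
  refine ContinuousLinearMap.coe_injective (LinearMap.ext_on_range he fun k ↦ ?_)
  exact (hf z).lineDeriv_eq_fderiv.symm.trans (hzero k z)

/-- The constant-coefficient operator `∑ ∂ₑ²`, summed over the directions `e k`. It is the Laplacian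
when these form an orthonormal basis, but its definition requires no inner product, so that it makes
sense on `ℝ × ℝ`, whose norm in Mathlib is the supremum norm. -/
def frameLaplacian {E κ : Type*} [NormedAddCommGroup E] [NormedSpace ℝ E] [Fintype κ]
    (e : κ → E) (f : E → ℝ) (x : E) : ℝ :=
  ∑ k, lineDeriv ℝ (lineDeriv ℝ f · (e k)) x (e k)

variable {E ι κ : Type*} [NormedAddCommGroup E] [NormedSpace ℝ E] [Fintype κ] {e : κ → E}
  {V v w : E → ℝ} {d c : ℝ}

lemma sum_lineDeriv_sq_mul_lineDeriv_div_eq (hv : ContDiff ℝ 2 v) (hw : ContDiff ℝ 2 w)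
    (hw0 : ∀ x, w x ≠ 0)
    (hveq : ∀ x, -frameLaplacian e v x + d * v x = V x * v x)
    (hweq : ∀ x, -frameLaplacian e w x + c * w x = V x * w x) (x : E) :
    ∑ k, lineDeriv ℝ (fun y ↦ w y ^ 2 * lineDeriv ℝ (v / w) y (e k)) x (e k) =
      (d - c) * (v x * w x) := by
  simp only [lineDeriv_sq_mul_lineDeriv_div hv hw hw0, Finset.sum_sub_distrib, ← Finset.mul_sum]
  change w x * frameLaplacian e v x - v x * frameLaplacian e w x = _
  linear_combination v x * hweq x - w x * hveq x

variable [FiniteDimensional ℝ E] {b : Module.Basis ι ℝ E}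

lemma eigenvalue_le_of_pos
    (hv : ContDiff ℝ 2 v) (hvper : ∀ i, Periodic v (b i)) (hvpos : ∀ x, 0 < v x)
    (hw : ContDiff ℝ 2 w) (hwper : ∀ i, Periodic w (b i)) (hwpos : ∀ x, 0 < w x)
    (hveq : ∀ x, -frameLaplacian e v x + d * v x = V x * v x)
    (hweq : ∀ x, -frameLaplacian e w x + c * w x = V x * w x) : d ≤ c := by
  by_contra! hcd
  have hw0 (x : E) : w x ≠ 0 := (hwpos x).ne'
  have hdiv := sum_lineDeriv_sq_mul_lineDeriv_div_eq hv hw hw0 hveq hweq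
  have hpos (x : E) : 0 < (d - c) * (v x * w x) :=
    mul_pos (sub_pos.mpr hcd) (mul_pos (hvpos x) (hwpos x))
  refine (hpos 0).ne' ((hdiv 0).symm.trans ?_)
  refine sum_lineDeriv_eq_zero_of_nonneg (b := b) (fun k ↦ ?_) (fun k i ↦ ?_)
    (fun x ↦ (hdiv x).symm ▸ (hpos x).le) 0
  · exact ((hw.of_le one_le_two).pow 2).mul
      (contDiff_lineDeriv (hv.div hw hw0) one_add_one_eq_two.le (e k))
  · exact ((hwper i).comp (· ^ 2)).mul (periodic_lineDeriv ((hvper i).div (hwper i)) (e k))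

theorem positive_eigenfunctions_proportional_general (he : span ℝ (range e) = ⊤)
    (hv : ContDiff ℝ 2 v) (hvper : ∀ i, Periodic v (b i)) (hvpos : ∀ x, 0 < v x)
    (hw : ContDiff ℝ 2 w) (hwper : ∀ i, Periodic w (b i)) (hwpos : ∀ x, 0 < w x)
    (hveq : ∀ x, -frameLaplacian e v x + d * v x = V x * v x)
    (hweq : ∀ x, -frameLaplacian e w x + c * w x = V x * w x) :
    d = c ∧ ∃ α : ℝ, 0 < α ∧ ∀ x, v x = α * w x := by
  have hdc : d = c := le_antisymm
    (eigenvalue_le_of_pos hv hvper hvpos hw hwper hwpos hveq hweq)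
    (eigenvalue_le_of_pos hw hwper hwpos hv hvper hvpos hweq hveq)
  have hw0 (x : E) : w x ≠ 0 := (hwpos x).ne'
  have hquot : ContDiff ℝ 2 (v / w) := hv.div hw hw0
  have hdiv (x : E) :
      ∑ k, lineDeriv ℝ (fun y ↦ w y ^ 2 * lineDeriv ℝ (v / w) y (e k)) x (e k) = 0 := by
    rw [sum_lineDeriv_sq_mul_lineDeriv_div_eq hv hw hw0 hveq hweq, hdc, sub_self, zero_mul]
  have hgrad := lineDeriv_eq_zero_of_sum_lineDeriv_mul_lineDeriv_eq_zero
    ((hw.of_le one_le_two).pow 2) (fun i ↦ (hwper i).comp (· ^ 2)) (fun x ↦ pow_pos (hwpos x) 2)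
    hquot (fun i ↦ (hvper i).div (hwper i)) hdiv
  refine ⟨hdc, v 0 / w 0, div_pos (hvpos 0) (hwpos 0), fun x ↦ (div_eq_iff (hw0 x)).mp ?_⟩
  exact eq_of_lineDeriv_eq_zero he (hquot.differentiable two_ne_zero) hgrad x 0

end Eigenfunctions

section Plane

lemma lineDeriv_fst (f : ℝ × ℝ → ℝ) (x y : ℝ) :
    lineDeriv ℝ f (x, y) (1, 0) = deriv (fun s ↦ f (s, y)) x := by
  simpa [lineDeriv] using deriv_comp_const_add (fun s ↦ f (s, y)) x 0

lemma lineDeriv_snd (f : ℝ × ℝ → ℝ) (x y : ℝ) :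
    lineDeriv ℝ f (x, y) (0, 1) = deriv (fun s ↦ f (x, s)) y := by
  simpa [lineDeriv] using deriv_comp_const_add (fun s ↦ f (x, s)) y 0

lemma lap_eq_frameLaplacian (u : ℝ → ℝ → ℝ) (p : ℝ × ℝ) :
    lap u p.1 p.2 = frameLaplacian (Module.Basis.finTwoProd ℝ) (uncurry u) p := by
  obtain ⟨x, y⟩ := p
  simp [frameLaplacian, lap, lineDeriv_fst, lineDeriv_snd]

/-- The basis `(2π, 0), (0, 2π)` of `ℝ²`, generating the lattice of periods of the doubly
`2π`-periodic functions. -/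
def twoPiBasis : Module.Basis (Fin 2) ℝ (ℝ × ℝ) :=
  (Module.Basis.finTwoProd ℝ).isUnitSMul fun _ ↦ (two_pi_pos.ne').isUnit

lemma periodic_uncurry_of_dblPeriodic {u : ℝ → ℝ → ℝ} (hu : DblPeriodic u) (i : Fin 2) :
    Periodic (uncurry u) (twoPiBasis i) := by
  rintro ⟨x, y⟩
  fin_cases i
  · simpa [twoPiBasis, Module.Basis.isUnitSMul_apply] using (hu x y).1
  · simpa [twoPiBasis, Module.Basis.isUnitSMul_apply] using (hu x y).2

end Plane

/-- Positive doubly periodic symmetric eigenfunctions of the Schrödinger operator −Δ − V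
correspond to the same eigenvalue and are proportional. -/
theorem positive_eigenfunctions_proportional (V : ℝ → ℝ → ℝ)
    (hVc : Continuous fun p : ℝ × ℝ => V p.1 p.2)
    (hVper : DblPeriodic V) (hVsym : SymFun V)
    (d c : ℝ) (v w : ℝ → ℝ → ℝ)
    (hvs : Smooth2 v) (hvper : DblPeriodic v) (hvsym : SymFun v)
    (hws : Smooth2 w) (hwper : DblPeriodic w) (hwsym : SymFun w)
    (hvpos : ∀ x y : ℝ, 0 < v x y) (hwpos : ∀ x y : ℝ, 0 < w x y)
    (hveq : ∀ x y : ℝ, -(lap v x y) + d * v x y = V x y * v x y)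
    (hweq : ∀ x y : ℝ, -(lap w x y) + c * w x y = V x y * w x y) :
    d = c ∧ ∃ α : ℝ, 0 < α ∧ ∀ x y : ℝ, v x y = α * w x y := by
  obtain ⟨hdc, α, hα, hprop⟩ :=
    positive_eigenfunctions_proportional_general (b := twoPiBasis) (V := uncurry V)
      (Module.Basis.finTwoProd ℝ).span_eq
      (contDiff_infty.mp hvs 2) (periodic_uncurry_of_dblPeriodic hvper) (fun p ↦ hvpos p.1 p.2)
      (contDiff_infty.mp hws 2) (periodic_uncurry_of_dblPeriodic hwper) (fun p ↦ hwpos p.1 p.2)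
      (fun p ↦ lap_eq_frameLaplacian v p ▸ hveq p.1 p.2)
      (fun p ↦ lap_eq_frameLaplacian w p ▸ hweq p.1 p.2)
  exact ⟨hdc, α, hα, fun x y ↦ hprop (x, y)⟩
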